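/- Let {x^k} be generated by the multiobjective MFISTA algorithm. Then for every z ∈ ℝ^n and every k ≥ 1: min_{i=1,…,m} ( F_i(x^k) − F_i(z) ) ≤ 2ℓ‖x^0 − z‖² / (k + 1)². -/

import Mathlib

open scoped RealInnerProductSpace

noncomputable abbrev E (n : ℕ) := EuclideanSpace ℝ (Fin n)

/-!
Let `F = f + g`. The proximal subproblem is strongly convex, so its minimizer `z` satisfies the
three-point inequality `minGap F x w ≤ minGap F x z + ℓ / 2 * (‖w - y‖ ^ 2 - ‖w - z‖ ^ 2)` for
every `w`; convexity of `f i` and the descent lemma allow passing from the linearized objectives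
to `F`. Put `σ k = minGap F (x k) w`. The acceptance rule and the superadditivity of `minGap` give
`minGap F (x (k - 1)) (z k) ≤ σ (k - 1) - σ k`, so the three-point inequality at `w`, respectively
at `x (k - 1)`, bounds `σ k`, respectively `σ k - σ (k - 1)`. Adding `t k` times the first bound
and `t k * (t k - 1)` times the second, Stewart's identity collects the squared norms into the
squared distances from `w` to the points `lineMap (x (k - 1)) (y k) (t k)` and
`lineMap (x (k - 1)) (z k) (t k)`. The recursions for `t` and `y` then make the energy
`t k ^ 2 * σ k + ℓ / 2 * ‖lineMap (x (k - 1)) (z k) (t k) - w‖ ^ 2` nonincreasing, and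
`(k + 1) / 2 ≤ t k` gives the rate.
-/

open AffineMap (lineMap)
open Filter Set Topology
open scoped Gradient

section Convexity

variable {V : Type*} [NormedAddCommGroup V] [NormedSpace ℝ V] {s : Set V} {f : V → ℝ} {b w : V}

theorem convexOn_ciSup {ι : Type*} [Nonempty ι] {f : ι → V → ℝ}
    (hbdd : ∀ x ∈ s, BddAbove (range fun i => f i x)) (hf : ∀ i, ConvexOn ℝ s (f i)) :
    ConvexOn ℝ s fun x => ⨆ i, f i x := by
  refine ⟨(hf (Classical.arbitrary ι)).1, fun x hx y hy a b ha hb hab => ciSup_le fun i => ?_⟩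
  calc f i (a • x + b • y) ≤ a • f i x + b • f i y := (hf i).2 hx hy ha hb hab
    _ ≤ a • (⨆ i, f i x) + b • ⨆ i, f i y := by
      gcongr
      · exact le_ciSup (hbdd x hx) i
      · exact le_ciSup (hbdd y hy) i

theorem add_fderiv_le_of_convexOn {f' : V →L[ℝ] ℝ} (hf : ConvexOn ℝ s f) (hb : b ∈ s) (hw : w ∈ s)
    (hf' : HasFDerivAt f f' b) : f b + f' (w - b) ≤ f w := by
  have hconv := hf.comp_affineMap (lineMap b w)
  have hderiv : HasDerivAt (f ∘ lineMap b w) (f' (w - b)) (0 : ℝ) :=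
    HasFDerivAt.comp_hasDerivAt 0 (by simpa using hf') AffineMap.hasDerivAt_lineMap
  have hslope := hconv.le_slope_of_hasDerivAt (x := 0) (y := 1) (by simpa using hb)
    (by simpa using hw) one_pos hderiv
  simp only [slope_def_field, Function.comp_apply, AffineMap.lineMap_apply_zero,
    AffineMap.lineMap_apply_one, sub_zero, div_one] at hslope
  linarith

theorem le_add_fderiv_add_sq_of_lipschitz {f' : V → V →L[ℝ] ℝ} {L : ℝ}
    (hf : ∀ a ∈ segment ℝ b w, HasFDerivAt f (f' a) a)
    (hlip : ∀ a ∈ segment ℝ b w, ‖f' a - f' b‖ ≤ L * ‖a - b‖) :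
    f w ≤ f b + f' b (w - b) + L / 2 * ‖w - b‖ ^ 2 := by
  have hmem : ∀ r ∈ Icc (0 : ℝ) 1, lineMap b w r ∈ segment ℝ b w := fun r hr =>
    lineMap_mem_segment ℝ b w hr
  have hline : ∀ r ∈ Icc (0 : ℝ) 1,
      HasDerivAt (f ∘ lineMap b w) (f' (lineMap b w r) (w - b)) r := fun r hr =>
    (hf _ (hmem r hr)).comp_hasDerivAt r AffineMap.hasDerivAt_lineMap
  have hquad : ∀ r : ℝ,
      HasDerivAt (fun r => f b + r * f' b (w - b) + L / 2 * ‖w - b‖ ^ 2 * r ^ 2)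
        (f' b (w - b) + L * ‖w - b‖ ^ 2 * r) r := fun r => by
    refine ((((hasDerivAt_id' r).mul_const (f' b (w - b))).const_add (f b)).add
      ((hasDerivAt_pow 2 r).const_mul (L / 2 * ‖w - b‖ ^ 2))).congr_deriv ?_
    push_cast
    ring
  have hbound : ∀ r ∈ Ico (0 : ℝ) 1,
      f' (lineMap b w r) (w - b) ≤ f' b (w - b) + L * ‖w - b‖ ^ 2 * r := fun r hr => by
    rw [← sub_le_iff_le_add']
    calc f' (lineMap b w r) (w - b) - f' b (w - b)
        ≤ ‖f' (lineMap b w r) - f' b‖ * ‖w - b‖ :=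
          (le_abs_self _).trans ((f' (lineMap b w r) - f' b).le_opNorm (w - b))
      _ ≤ L * ‖lineMap b w r - b‖ * ‖w - b‖ := by
          gcongr
          exact hlip _ (hmem r (Ico_subset_Icc_self hr))
      _ = L * ‖w - b‖ ^ 2 * r := by
          rw [AffineMap.lineMap_apply_module', add_sub_cancel_right, norm_smul,
            Real.norm_of_nonneg hr.1]
          ring
  have hle := image_le_of_deriv_right_le_deriv_boundary
    (fun r hr => (hline r hr).continuousAt.continuousWithinAt)
    (fun r hr => (hline r (Ico_subset_Icc_self hr)).hasDerivWithinAt)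
    (by simp) (fun r _ => (hquad r).continuousAt.continuousWithinAt)
    (fun r _ => (hquad r).hasDerivWithinAt) hbound (right_mem_Icc.2 zero_le_one)
  simpa using hle

theorem add_modulus_le_of_isMinOn {φ : ℝ → ℝ} {z : V} (hf : UniformConvexOn s φ f)
    (hmin : IsMinOn f s z) (hz : z ∈ s) (hw : w ∈ s) : f z + φ ‖w - z‖ ≤ f w := by
  have hscaled : ∀ a ∈ Ioo (0 : ℝ) 1, f z + (1 - a) * φ ‖w - z‖ ≤ f w := fun a ha => by
    have hcombo : a • w + (1 - a) • z ∈ s :=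
      hf.1 hw hz ha.1.le (sub_nonneg.2 ha.2.le) (add_sub_cancel a 1)
    have hle : f z ≤ a • f w + (1 - a) • f z - a * (1 - a) * φ ‖w - z‖ :=
      (isMinOn_iff.1 hmin _ hcombo).trans
        (hf.2 hw hz ha.1.le (sub_nonneg.2 ha.2.le) (add_sub_cancel a 1))
    simp only [smul_eq_mul] at hle
    exact le_of_mul_le_mul_left (by linarith) ha.1
  have hlim : Tendsto (fun a : ℝ => f z + (1 - a) * φ ‖w - z‖) (𝓝[>] 0)
      (𝓝 (f z + φ ‖w - z‖)) :=
    (Continuous.tendsto' (by fun_prop) _ _ (by simp)).mono_left nhdsWithin_le_nhds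
  exact le_of_tendsto hlim (mem_of_superset (Ioo_mem_nhdsGT one_pos) hscaled)

end Convexity

section InnerProduct

variable {H : Type*} [NormedAddCommGroup H] [InnerProductSpace ℝ H]

theorem strongConvexOn_add_sq_norm_sub {s : Set H} {h : H → ℝ} (hh : ConvexOn ℝ s h) (ℓ : ℝ)
    (y : H) : StrongConvexOn s ℓ fun z => h z + ℓ / 2 * ‖z - y‖ ^ 2 := by
  rw [strongConvexOn_iff_convex]
  refine ((hh.add ((innerₗ H (-ℓ • y)).convexOn hh.1)).add_const (ℓ / 2 * ‖y‖ ^ 2)).congr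
    fun z _ => ?_
  simp only [norm_sub_sq_real, Pi.add_apply, innerₗ_apply_apply, real_inner_smul_left,
    real_inner_comm z y]
  ring

theorem norm_lineMap_sub_sq (p q w : H) (r : ℝ) :
    ‖lineMap p q r - w‖ ^ 2 =
      (1 - r) * ‖w - p‖ ^ 2 + r * ‖w - q‖ ^ 2 - r * (1 - r) * ‖p - q‖ ^ 2 := by
  have hsplit : lineMap p q r - w = -((1 - r) • (w - p) + r • (w - q)) := by
    rw [AffineMap.lineMap_apply_module]
    module
  have hpq : p - q = (w - q) - (w - p) := by abel
  rw [hsplit, norm_neg, hpq, norm_add_sq_real, norm_sub_sq_real (w - q) (w - p), norm_smul,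
    norm_smul, mul_pow, mul_pow, Real.norm_eq_abs, Real.norm_eq_abs, sq_abs, sq_abs,
    real_inner_smul_left, real_inner_smul_right, real_inner_comm (w - p) (w - q)]
  ring

end InnerProduct

/-- The successor map of the momentum parameters of FISTA. -/
noncomputable def momentumSucc (s : ℝ) : ℝ := (1 + √(1 + 4 * s ^ 2)) / 2

theorem momentumSucc_mul_sub_one (s : ℝ) : momentumSucc s * (momentumSucc s - 1) = s ^ 2 := by
  have hsqrt := Real.sq_sqrt (by positivity : 0 ≤ 1 + 4 * s ^ 2)
  unfold momentumSucc
  linarith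

theorem add_half_le_momentumSucc (s : ℝ) : s + 1 / 2 ≤ momentumSucc s := by
  have hsqrt : 2 * s ≤ √(1 + 4 * s ^ 2) := Real.le_sqrt_of_sq_le (by linarith)
  unfold momentumSucc
  linarith

/-- The least amount by which the objectives `F i` decrease from `u` to `v`: the measure of
progress of the algorithm, a minimum when `ι` is finite and nonempty. -/
noncomputable def minGap {ι X : Type*} (F : ι → X → ℝ) (u v : X) : ℝ := ⨅ i, (F i u - F i v)

section MinGap

variable {ι X : Type*}

theorem minGap_self (F : ι → X → ℝ) (u : X) : minGap F u u = 0 := by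
  simp only [minGap, sub_self, Real.iInf_const_zero]

variable [Finite ι]

theorem minGap_le (F : ι → X → ℝ) (u v : X) (i : ι) : minGap F u v ≤ F i u - F i v :=
  ciInf_le (finite_range _).bddBelow i

variable [Nonempty ι]

theorem minGap_add_minGap_le (F : ι → X → ℝ) (u v w : X) :
    minGap F u v + minGap F v w ≤ minGap F u w :=
  le_ciInf fun i => by linarith [minGap_le F u v i, minGap_le F v w i]

theorem minGap_le_ciSup (F : ι → X → ℝ) (u v : X) : minGap F u v ≤ ⨆ i, (F i u - F i v) :=
  ciInf_le_ciSup (finite_range _).bddBelow (finite_range _).bddAbove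

end MinGap

section ProximalStep

variable {H : Type*} [NormedAddCommGroup H] [InnerProductSpace ℝ H] [CompleteSpace H]

/-- The convex model of `f + g` at `y` that linearizes the smooth part `f` only. -/
noncomputable def partialLinearization (f g : H → ℝ) (y w : H) : ℝ := ⟪∇ f y, w - y⟫ + g w + f y

/-- The objective `φ_{x,y,ℓ}` whose minimizer is the proximal gradient point `d_ℓ(x, y)`. -/
noncomputable def proxObjective {ι : Type*} (f g : ι → H → ℝ) (ℓ : ℝ) (x y w : H) : ℝ :=
  (⨆ i, (partialLinearization (f i) (g i) y w - (f + g) i x)) + ℓ / 2 * ‖w - y‖ ^ 2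

theorem convexOn_partialLinearization {s : Set H} {g : H → ℝ} (f : H → ℝ) (hg : ConvexOn ℝ s g)
    (y : H) : ConvexOn ℝ s (partialLinearization f g y) := by
  refine ((((innerₗ H (∇ f y)).convexOn hg.1).add hg).add_const (f y - ⟪∇ f y, y⟫)).congr
    fun w _ => ?_
  simp only [partialLinearization, inner_sub_right, Pi.add_apply, innerₗ_apply_apply]
  ring

theorem partialLinearization_le {f : H → ℝ} {y : H} (hfc : ConvexOn ℝ univ f)
    (hfd : DifferentiableAt ℝ f y) (g : H → ℝ) (w : H) :
    partialLinearization f g y w ≤ f w + g w := by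
  have htangent := add_fderiv_le_of_convexOn hfc (mem_univ y) (mem_univ w) hfd.hasFDerivAt
  rw [partialLinearization, inner_gradient_left]
  linarith

theorem le_partialLinearization_add_sq {f : H → ℝ} {ℓ : ℝ} {y : H} (hfd : Differentiable ℝ f)
    (hlip : ∀ a, ‖∇ f a - ∇ f y‖ ≤ ℓ * ‖a - y‖) (g : H → ℝ) (w : H) :
    f w + g w ≤ partialLinearization f g y w + ℓ / 2 * ‖w - y‖ ^ 2 := by
  have hlip' : ∀ a, ‖fderiv ℝ f a - fderiv ℝ f y‖ ≤ ℓ * ‖a - y‖ := fun a => by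
    rw [← toDual_gradient, ← toDual_gradient, ← map_sub, LinearIsometryEquiv.norm_map]
    exact hlip a
  have hdescent := le_add_fderiv_add_sq_of_lipschitz (w := w)
    (fun a _ => (hfd a).hasFDerivAt) (fun a _ => hlip' a)
  rw [partialLinearization, inner_gradient_left]
  linarith

variable {ι : Type*} [Finite ι] [Nonempty ι] {f g : ι → H → ℝ} {ℓ : ℝ}

theorem proxObjective_add_sq_le_of_isMinOn (hgc : ∀ i, ConvexOn ℝ univ (g i)) {x y z : H}
    (hz : IsMinOn (proxObjective f g ℓ x y) univ z) (w : H) :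
    proxObjective f g ℓ x y z + ℓ / 2 * ‖w - z‖ ^ 2 ≤ proxObjective f g ℓ x y w := by
  have hconv : ConvexOn ℝ univ
      fun w => ⨆ i, (partialLinearization (f i) (g i) y w - (f + g) i x) :=
    convexOn_ciSup (fun _ _ => (finite_range _).bddAbove) fun i =>
      (convexOn_partialLinearization (f i) (hgc i) y).sub (concaveOn_const _ convex_univ)
  exact add_modulus_le_of_isMinOn (strongConvexOn_add_sq_norm_sub hconv ℓ y) hz (mem_univ z)
    (mem_univ w)

theorem proxObjective_le (hfc : ∀ i, ConvexOn ℝ univ (f i)) (hfd : ∀ i, Differentiable ℝ (f i))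
    (x y w : H) :
    proxObjective f g ℓ x y w ≤ -minGap (f + g) x w + ℓ / 2 * ‖w - y‖ ^ 2 := by
  refine add_le_add_left (ciSup_le fun i => ?_) _
  have hlin := partialLinearization_le (hfc i) (hfd i y) (g i) w
  have hgap := minGap_le (f + g) x w i
  simp only [Pi.add_apply] at hgap ⊢
  linarith

theorem neg_minGap_le_proxObjective (hfd : ∀ i, Differentiable ℝ (f i))
    (hlip : ∀ i a b, ‖∇ (f i) a - ∇ (f i) b‖ ≤ ℓ * ‖a - b‖) (x y w : H) :
    -minGap (f + g) x w ≤ proxObjective f g ℓ x y w := by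
  rw [neg_le]
  refine le_ciInf fun i => ?_
  have hlin := le_partialLinearization_add_sq (hfd i) (hlip i · y) (g i) w
  have hsup : partialLinearization (f i) (g i) y w - (f + g) i x ≤
      ⨆ i, (partialLinearization (f i) (g i) y w - (f + g) i x) :=
    le_ciSup (f := fun i => partialLinearization (f i) (g i) y w - (f + g) i x)
      (finite_range _).bddAbove i
  simp only [proxObjective, Pi.add_apply] at hsup ⊢
  linarith

theorem minGap_le_of_isMinOn_proxObjective (hfc : ∀ i, ConvexOn ℝ univ (f i))
    (hfd : ∀ i, Differentiable ℝ (f i)) (hlip : ∀ i a b, ‖∇ (f i) a - ∇ (f i) b‖ ≤ ℓ * ‖a - b‖)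
    (hgc : ∀ i, ConvexOn ℝ univ (g i)) {x y z : H}
    (hz : IsMinOn (proxObjective f g ℓ x y) univ z) (w : H) :
    minGap (f + g) x w ≤ minGap (f + g) x z + ℓ / 2 * (‖w - y‖ ^ 2 - ‖w - z‖ ^ 2) := by
  have hlower := neg_minGap_le_proxObjective (g := g) hfd hlip x y z
  have hgrowth := proxObjective_add_sq_le_of_isMinOn hgc hz w
  have hupper := proxObjective_le (g := g) (ℓ := ℓ) hfc hfd x y w
  linarith

end ProximalStep

/-- `IsMFISTA f g ℓ x y z t` says that `x`, `y`, `z` and `t` are generated by the multiobjective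
MFISTA algorithm for the objectives `f i + g i` with step parameter `ℓ`. The indices are those of
the algorithm with `k + 1` in place of `k`, so that `y 0`, `z 0` and `t 0` are irrelevant. -/
structure IsMFISTA {ι H : Type*} [NormedAddCommGroup H] [InnerProductSpace ℝ H] [CompleteSpace H]
    (f g : ι → H → ℝ) (ℓ : ℝ) (x y z : ℕ → H) (t : ℕ → ℝ) : Prop where
  y_one : y 1 = x 0
  t_one : t 1 = 1
  t_succ : ∀ k, t (k + 2) = momentumSucc (t (k + 1))
  isMinOn_z : ∀ k, IsMinOn (proxObjective f g ℓ (x k) (y (k + 1))) univ (z (k + 1))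
  x_of_nonneg : ∀ k, 0 ≤ (⨆ i, ((f + g) i (x k) - (f + g) i (z (k + 1)))) → x (k + 1) = z (k + 1)
  x_of_neg : ∀ k, ¬ 0 ≤ (⨆ i, ((f + g) i (x k) - (f + g) i (z (k + 1)))) → x (k + 1) = x k
  y_succ : ∀ k, y (k + 2) = x (k + 1) + (t (k + 1) / t (k + 2)) • (z (k + 1) - x (k + 1)) +
    ((t (k + 1) - 1) / t (k + 2)) • (x (k + 1) - x k)

namespace IsMFISTA

variable {ι H : Type*} [NormedAddCommGroup H] [InnerProductSpace ℝ H] [CompleteSpace H]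
  {f g : ι → H → ℝ} {ℓ : ℝ} {x y z : ℕ → H} {t : ℕ → ℝ}

theorem le_t (h : IsMFISTA f g ℓ x y z t) (k : ℕ) : ((k : ℝ) + 2) / 2 ≤ t (k + 1) := by
  induction k with
  | zero => norm_num [h.t_one]
  | succ k ih =>
    have hstep := add_half_le_momentumSucc (t (k + 1))
    rw [h.t_succ]
    push_cast
    linarith

theorem one_le_t (h : IsMFISTA f g ℓ x y z t) (k : ℕ) : 1 ≤ t (k + 1) := by
  linarith [h.le_t k, k.cast_nonneg (α := ℝ)]

theorem lineMap_y_succ (h : IsMFISTA f g ℓ x y z t) (k : ℕ) :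
    lineMap (x (k + 1)) (y (k + 2)) (t (k + 2)) = lineMap (x k) (z (k + 1)) (t (k + 1)) := by
  have ht : t (k + 2) ≠ 0 := (one_pos.trans_le (h.one_le_t (k + 1))).ne'
  simp only [AffineMap.lineMap_apply_module, h.y_succ, smul_add, smul_smul, mul_div_cancel₀ _ ht]
  module

variable [Finite ι] [Nonempty ι]

theorem minGap_z_add_minGap_x_le (h : IsMFISTA f g ℓ x y z t) (k : ℕ) (w : H) :
    minGap (f + g) (x k) (z (k + 1)) + minGap (f + g) (x (k + 1)) w ≤
      minGap (f + g) (x k) w := by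
  by_cases haccept : 0 ≤ ⨆ i, ((f + g) i (x k) - (f + g) i (z (k + 1)))
  · rw [h.x_of_nonneg k haccept]
    exact minGap_add_minGap_le _ _ _ _
  · rw [h.x_of_neg k haccept]
    linarith [minGap_le_ciSup (f + g) (x k) (z (k + 1))]

theorem energy_step (h : IsMFISTA f g ℓ x y z t) (hfc : ∀ i, ConvexOn ℝ univ (f i))
    (hfd : ∀ i, Differentiable ℝ (f i)) (hlip : ∀ i a b, ‖∇ (f i) a - ∇ (f i) b‖ ≤ ℓ * ‖a - b‖)
    (hgc : ∀ i, ConvexOn ℝ univ (g i)) (w : H) (k : ℕ) :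
    t (k + 1) ^ 2 * minGap (f + g) (x (k + 1)) w +
        ℓ / 2 * ‖lineMap (x k) (z (k + 1)) (t (k + 1)) - w‖ ^ 2 ≤
      t (k + 1) * (t (k + 1) - 1) * minGap (f + g) (x k) w +
        ℓ / 2 * ‖lineMap (x k) (y (k + 1)) (t (k + 1)) - w‖ ^ 2 := by
  have ht := h.one_le_t k
  have hprox := minGap_le_of_isMinOn_proxObjective hfc hfd hlip hgc (h.isMinOn_z k)
  have hgap := h.minGap_z_add_minGap_x_le k w
  have hvalue : minGap (f + g) (x (k + 1)) w ≤
      ℓ / 2 * (‖w - y (k + 1)‖ ^ 2 - ‖w - z (k + 1)‖ ^ 2) := by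
    linarith [hprox w]
  have hdecrease : minGap (f + g) (x (k + 1)) w - minGap (f + g) (x k) w ≤
      ℓ / 2 * (‖x k - y (k + 1)‖ ^ 2 - ‖x k - z (k + 1)‖ ^ 2) := by
    linarith [hprox (x k), minGap_self (f + g) (x k)]
  have hvalue' := mul_le_mul_of_nonneg_left hvalue (by linarith : 0 ≤ t (k + 1))
  have hdecrease' := mul_le_mul_of_nonneg_left hdecrease
    (mul_nonneg (by linarith) (by linarith) : 0 ≤ t (k + 1) * (t (k + 1) - 1))
  rw [norm_lineMap_sub_sq, norm_lineMap_sub_sq]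
  linarith

theorem energy_le (h : IsMFISTA f g ℓ x y z t) (hfc : ∀ i, ConvexOn ℝ univ (f i))
    (hfd : ∀ i, Differentiable ℝ (f i)) (hlip : ∀ i a b, ‖∇ (f i) a - ∇ (f i) b‖ ≤ ℓ * ‖a - b‖)
    (hgc : ∀ i, ConvexOn ℝ univ (g i)) (w : H) (k : ℕ) :
    t (k + 1) ^ 2 * minGap (f + g) (x (k + 1)) w +
      ℓ / 2 * ‖lineMap (x k) (z (k + 1)) (t (k + 1)) - w‖ ^ 2 ≤ ℓ / 2 * ‖x 0 - w‖ ^ 2 := by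
  induction k with
  | zero => simpa [h.t_one, h.y_one] using h.energy_step hfc hfd hlip hgc w 0
  | succ k ih =>
    have hstep := h.energy_step hfc hfd hlip hgc w (k + 1)
    rw [h.lineMap_y_succ] at hstep
    refine hstep.trans (le_trans (le_of_eq ?_) ih)
    rw [h.t_succ, momentumSucc_mul_sub_one]

end IsMFISTA

theorem stmt_15_general {ι H : Type*} [Finite ι] [Nonempty ι] [NormedAddCommGroup H]
    [InnerProductSpace ℝ H] [CompleteSpace H] {f g : ι → H → ℝ} {ℓ : ℝ} {x y z : ℕ → H} {t : ℕ → ℝ}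
    (hℓ : 0 ≤ ℓ) (hfc : ∀ i, ConvexOn ℝ univ (f i)) (hfd : ∀ i, Differentiable ℝ (f i))
    (hlip : ∀ i a b, ‖∇ (f i) a - ∇ (f i) b‖ ≤ ℓ * ‖a - b‖) (hgc : ∀ i, ConvexOn ℝ univ (g i))
    (h : IsMFISTA f g ℓ x y z t) (w : H) (k : ℕ) (hk : 1 ≤ k) :
    minGap (f + g) (x k) w ≤ 2 * ℓ * ‖x 0 - w‖ ^ 2 / ((k : ℝ) + 1) ^ 2 := by
  obtain ⟨k, rfl⟩ := Nat.exists_eq_add_of_le' hk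
  have henergy := h.energy_le hfc hfd hlip hgc w k
  have hweighted : minGap (f + g) (x (k + 1)) w * t (k + 1) ^ 2 ≤ ℓ / 2 * ‖x 0 - w‖ ^ 2 := by
    have hnonneg : 0 ≤ ℓ / 2 * ‖lineMap (x k) (z (k + 1)) (t (k + 1)) - w‖ ^ 2 := by positivity
    linarith
  have ht : 0 < t (k + 1) := one_pos.trans_le (h.one_le_t k)
  calc minGap (f + g) (x (k + 1)) w
      ≤ ℓ / 2 * ‖x 0 - w‖ ^ 2 / t (k + 1) ^ 2 := (le_div_iff₀ (by positivity)).2 hweighted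
    _ ≤ ℓ / 2 * ‖x 0 - w‖ ^ 2 / (((k : ℝ) + 2) / 2) ^ 2 := by
        gcongr
        exact h.le_t k
    _ = 2 * ℓ * ‖x 0 - w‖ ^ 2 / (((k + 1 : ℕ) : ℝ) + 1) ^ 2 := by
        push_cast
        field_simp
        ring

theorem stmt_15
    (n m : ℕ) (hn : 1 ≤ n) (hm : 1 ≤ m)
    (f g F : Fin m → E n → ℝ)
    (L : Fin m → ℝ) (hL : ∀ i, 0 < L i)
    (hfc : ∀ i, ConvexOn ℝ Set.univ (f i))
    (hfd : ∀ i, ContDiff ℝ 1 (f i))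
    (hflip : ∀ i a b, ‖gradient (f i) a - gradient (f i) b‖ ≤ L i * ‖a - b‖)
    (hgc : ∀ i, ConvexOn ℝ Set.univ (g i))
    (hF : ∀ i w, F i w = f i w + g i w)
    (ℓ : ℝ) (hℓ : 0 < ℓ) (hℓL : ∀ i, L i ≤ ℓ)
    (d : E n → E n → E n)
    (hd : ∀ a b w,
      (⨆ i, (⟪gradient (f i) b, d a b - b⟫ + g i (d a b) + f i b - F i a)) +
          ℓ / 2 * ‖d a b - b‖ ^ 2 ≤
        (⨆ i, (⟪gradient (f i) b, w - b⟫ + g i w + f i b - F i a)) +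
          ℓ / 2 * ‖w - b‖ ^ 2)
    (x y z : ℕ → E n) (t : ℕ → ℝ)
    (hy1 : y 1 = x 0) (ht1 : t 1 = 1)
    (ht : ∀ k, 1 ≤ k → t (k + 1) = (1 + Real.sqrt (1 + 4 * t k ^ 2)) / 2)
    (hz : ∀ k, 1 ≤ k → z k = d (x (k - 1)) (y k))
    (hxpos : ∀ k, 1 ≤ k → 0 ≤ (⨆ i, (F i (x (k - 1)) - F i (z k))) → x k = z k)
    (hxneg : ∀ k, 1 ≤ k → ¬ 0 ≤ (⨆ i, (F i (x (k - 1)) - F i (z k))) → x k = x (k - 1))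
    (hy : ∀ k, 1 ≤ k →
      y (k + 1) = x k + (t k / t (k + 1)) • (z k - x k) +
        ((t k - 1) / t (k + 1)) • (x k - x (k - 1))) :
    ∀ (w : E n) (k : ℕ), 1 ≤ k →
      (⨅ i, (F i (x k) - F i w)) ≤ 2 * ℓ * ‖x 0 - w‖ ^ 2 / ((k : ℝ) + 1) ^ 2 := by
  have : Nonempty (Fin m) := ⟨⟨0, hm⟩⟩
  obtain rfl : F = f + g := funext₂ hF
  have hlip : ∀ i a b, ‖∇ (f i) a - ∇ (f i) b‖ ≤ ℓ * ‖a - b‖ := fun i a b =>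
    (hflip i a b).trans (by gcongr; exact hℓL i)
  have hrun : IsMFISTA f g ℓ x y z t :=
    { y_one := hy1
      t_one := ht1
      t_succ := fun k => ht (k + 1) k.succ_pos
      isMinOn_z := fun k => hz (k + 1) k.succ_pos ▸ isMinOn_univ_iff.2 (hd (x k) (y (k + 1)))
      x_of_nonneg := fun k => hxpos (k + 1) k.succ_pos
      x_of_neg := fun k => hxneg (k + 1) k.succ_pos
      y_succ := fun k => hy (k + 1) k.succ_pos }
  exact stmt_15_general hℓ.le hfc (fun i => (hfd i).differentiable one_ne_zero) hlip hgc hrun
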